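/- For every t ≥ 0, every permutation σ with t_rev(σ) ≥ t+1 has length at least t+3, and this bound is sharp: for every t ≥ 0 there exists a permutation of length exactly t+3 with rev-tier t+1. In particular, every basis element of the class of permutations with rev-tier at most t has length at least t+3. -/

import Mathlib

/-!  Common definitions: permutation patterns, separated pairs, rev-tier. -/

/-- `π` contains the pattern `σ`. -/
def Pattern.Contains {n k : ℕ} (π : Equiv.Perm (Fin n)) (σ : Equiv.Perm (Fin k)) : Prop :=
  ∃ α : Fin k → Fin n, StrictMono α ∧ ∀ i j : Fin k, (π (α i) < π (α j) ↔ σ i < σ j)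

/-- `π` avoids the pattern `σ`. -/
def Pattern.Avoids {n k : ℕ} (π : Equiv.Perm (Fin n)) (σ : Equiv.Perm (Fin k)) : Prop :=
  ¬ Pattern.Contains π σ

/-- The pair of values `(a, a+1)` (0-indexed) is an up oriented separated pair in `σ`:
`a` precedes `a+1` and some value `> a+1` occurs strictly between them. -/
def UpSepPair {n : ℕ} (σ : Equiv.Perm (Fin n)) (a : Fin n) : Prop :=
  ∃ hb : (a : ℕ) + 1 < n,
    σ.symm a < σ.symm ⟨(a : ℕ) + 1, hb⟩ ∧
    ∃ p : Fin n, σ.symm a < p ∧ p < σ.symm ⟨(a : ℕ) + 1, hb⟩ ∧ (a : ℕ) + 1 < (σ p : ℕ)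

/-- The pair of values `(a, a+1)` (0-indexed) is a down oriented separated pair in `σ`. -/
def DownSepPair {n : ℕ} (σ : Equiv.Perm (Fin n)) (a : Fin n) : Prop :=
  ∃ hb : (a : ℕ) + 1 < n,
    σ.symm ⟨(a : ℕ) + 1, hb⟩ < σ.symm a ∧
    ∃ p : Fin n, σ.symm ⟨(a : ℕ) + 1, hb⟩ < p ∧ p < σ.symm a ∧ (a : ℕ) + 1 < (σ p : ℕ)

/-- `(a, a+1)` is a separated pair (of either orientation). -/
def SepPair {n : ℕ} (σ : Equiv.Perm (Fin n)) (a : Fin n) : Prop :=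
  UpSepPair σ a ∨ DownSepPair σ a

/-- `σ` has no separated pairs. -/
def NoSepPairs {n : ℕ} (σ : Equiv.Perm (Fin n)) : Prop :=
  ∀ a : Fin n, ¬ SepPair σ a

/-- `f` lists the lower values of an increasing sequence of separated pairs in `σ` with
alternating orientations; the first pair is down oriented iff `firstDown = true`. -/
def AltChain {n : ℕ} (σ : Equiv.Perm (Fin n)) (firstDown : Bool) {t : ℕ}
    (f : Fin t → Fin n) : Prop :=
  StrictMono f ∧ ∀ j : Fin t,
    if ((j : ℕ) % 2 = 0) ↔ (firstDown = true) then DownSepPair σ (f j)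
    else UpSepPair σ (f j)

/-- The rev-tier of `σ`: the maximal length of an increasing sequence of separated pairs
with alternating orientations beginning with a down oriented pair. -/
noncomputable def revTier {n : ℕ} (σ : Equiv.Perm (Fin n)) : ℕ :=
  sSup {t : ℕ | ∃ f : Fin t → Fin n, AltChain σ true f}

/-- Maximal length of an increasing alternating sequence of separated pairs (either
starting orientation). -/
noncomputable def maxAltLen {n : ℕ} (σ : Equiv.Perm (Fin n)) : ℕ :=
  sSup {t : ℕ | ∃ b : Bool, ∃ f : Fin t → Fin n, AltChain σ b f}

/-- `σ` has a separated pair and every maximum-length increasing alternating sequence of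
separated pairs begins with an up oriented pair. -/
def UpOriented {n : ℕ} (σ : Equiv.Perm (Fin n)) : Prop :=
  1 ≤ maxAltLen σ ∧ ¬ ∃ f : Fin (maxAltLen σ) → Fin n, AltChain σ true f

/-- `σ` has a separated pair and every maximum-length increasing alternating sequence of
separated pairs begins with a down oriented pair. -/
def DownOriented {n : ℕ} (σ : Equiv.Perm (Fin n)) : Prop :=
  1 ≤ maxAltLen σ ∧ ¬ ∃ f : Fin (maxAltLen σ) → Fin n, AltChain σ false f

/-- `σ` is a basis element of the class of permutations of rev-tier at most `t`. -/
def IsBasisElt (t : ℕ) {n : ℕ} (σ : Equiv.Perm (Fin n)) : Prop :=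
  t + 1 ≤ revTier σ ∧
  ∀ (m : ℕ) (τ : Equiv.Perm (Fin m)), m < n → Pattern.Contains σ τ → revTier τ ≤ t

/-- The entry `1` of `σ` is in (1-indexed) position `k`. -/
def onePos {n : ℕ} (σ : Equiv.Perm (Fin n)) (k : ℕ) : Prop :=
  ∀ h : 0 < n, (σ.symm ⟨0, h⟩ : ℕ) + 1 = k

/-- `η(n,k)`: number of permutations of length `n` with no separated pairs and entry `1`
in position `k`. -/
noncomputable def eta (n k : ℕ) : ℕ :=
  Nat.card {σ : Equiv.Perm (Fin n) // NoSepPairs σ ∧ onePos σ k}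

/-- `η(n)`: number of permutations of length `n` with no separated pairs. -/
noncomputable def etaTot (n : ℕ) : ℕ :=
  Nat.card {σ : Equiv.Perm (Fin n) // NoSepPairs σ}

/-- `μ_U(n,t,k)`: number of up-oriented permutations of length `n`, rev-tier `t`, with
entry `1` in position `k`. -/
noncomputable def muU (n t k : ℕ) : ℕ :=
  Nat.card {σ : Equiv.Perm (Fin n) // UpOriented σ ∧ revTier σ = t ∧ onePos σ k}

/-- `μ_D(n,t,k)`: number of down-oriented permutations of length `n`, rev-tier `t`, with
entry `1` in position `k`. -/
noncomputable def muD (n t k : ℕ) : ℕ :=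
  Nat.card {σ : Equiv.Perm (Fin n) // DownOriented σ ∧ revTier σ = t ∧ onePos σ k}

/-- `π` is a down-up alternating permutation: `π₁ > π₂ < π₃ > ⋯`. -/
def DownUp {n : ℕ} (π : Equiv.Perm (Fin n)) : Prop :=
  ∀ (i : ℕ) (h : i + 1 < n),
    if i % 2 = 0 then π ⟨i + 1, h⟩ < π ⟨i, by omega⟩
    else π ⟨i, by omega⟩ < π ⟨i + 1, h⟩

/-- The Entringer number `E_{n,k}`: down-up alternating permutations of length `n` whose
first entry is `k` (1-indexed value). -/
noncomputable def entringer (n k : ℕ) : ℕ :=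
  Nat.card {π : Equiv.Perm (Fin n) // DownUp π ∧ ∀ h : 0 < n, (π ⟨0, h⟩ : ℕ) + 1 = k}

/-- The reversal of a permutation: `(revP σ) j = σ (n + 1 - j)`. -/
def revP {n : ℕ} (σ : Equiv.Perm (Fin n)) : Equiv.Perm (Fin n) :=
  (Fin.revPerm).trans σ

/-- The explicit maximal rev-tier permutation of length `n` (0-indexed values):
the even entries of `{1,…,n}` in decreasing order, then `n`, then the odd entries in
increasing order. -/
def maxPermVal (n : ℕ) (i : Fin n) : Fin n :=
  if h1 : (i : ℕ) < (n - 1) / 2 then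
    ⟨2 * ((n - 1) / 2) - 2 * (i : ℕ) - 1, by omega⟩
  else if h2 : (i : ℕ) = (n - 1) / 2 then
    ⟨n - 1, by have := i.isLt; omega⟩
  else
    ⟨2 * ((i : ℕ) - (n - 1) / 2 - 1), by have := i.isLt; omega⟩

def p231 : Equiv.Perm (Fin 3) :=
  ⟨![1, 2, 0], ![2, 0, 1], by decide, by decide⟩

def p132 : Equiv.Perm (Fin 3) :=
  ⟨![0, 2, 1], ![0, 2, 1], by decide, by decide⟩

def p2413 : Equiv.Perm (Fin 4) :=
  ⟨![1, 3, 0, 2], ![2, 0, 3, 1], by decide, by decide⟩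

def p2431 : Equiv.Perm (Fin 4) :=
  ⟨![1, 3, 2, 0], ![3, 0, 2, 1], by decide, by decide⟩

def p23154 : Equiv.Perm (Fin 5) :=
  ⟨![1, 2, 0, 4, 3], ![2, 0, 1, 4, 3], by decide, by decide⟩

def p24153 : Equiv.Perm (Fin 5) :=
  ⟨![1, 3, 0, 4, 2], ![2, 0, 4, 1, 3], by decide, by decide⟩

def p24513 : Equiv.Perm (Fin 5) :=
  ⟨![1, 3, 4, 0, 2], ![3, 0, 4, 1, 2], by decide, by decide⟩

def p24531 : Equiv.Perm (Fin 5) :=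
  ⟨![1, 3, 4, 2, 0], ![4, 0, 3, 1, 2], by decide, by decide⟩

def p42513 : Equiv.Perm (Fin 5) :=
  ⟨![3, 1, 4, 0, 2], ![3, 1, 4, 0, 2], by decide, by decide⟩

def p42531 : Equiv.Perm (Fin 5) :=
  ⟨![3, 1, 4, 2, 0], ![4, 1, 3, 0, 2], by decide, by decide⟩

def p231564 : Equiv.Perm (Fin 6) :=
  ⟨![1, 2, 0, 4, 5, 3], ![2, 0, 1, 5, 3, 4], by decide, by decide⟩

def p261453 : Equiv.Perm (Fin 6) :=
  ⟨![1, 5, 0, 3, 4, 2], ![2, 0, 5, 3, 4, 1], by decide, by decide⟩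

def p523164 : Equiv.Perm (Fin 6) :=
  ⟨![4, 1, 2, 0, 5, 3], ![3, 1, 2, 5, 0, 4], by decide, by decide⟩

def p562413 : Equiv.Perm (Fin 6) :=
  ⟨![4, 5, 1, 3, 0, 2], ![4, 2, 5, 3, 0, 1], by decide, by decide⟩

def p562431 : Equiv.Perm (Fin 6) :=
  ⟨![4, 5, 1, 3, 2, 0], ![5, 2, 4, 3, 0, 1], by decide, by decide⟩

def p6723154 : Equiv.Perm (Fin 7) :=
  ⟨![5, 6, 1, 2, 0, 4, 3], ![4, 2, 3, 6, 5, 0, 1], by decide, by decide⟩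

def p4321 : Equiv.Perm (Fin 4) :=
  ⟨![3, 2, 1, 0], ![3, 2, 1, 0], by decide, by decide⟩

def p4213 : Equiv.Perm (Fin 4) :=
  ⟨![3, 1, 0, 2], ![2, 1, 3, 0], by decide, by decide⟩

/-!
The lower values of a sequence of separated pairs are distinct, and each is smaller than `n - 2`
because a separated pair `(a, a + 1)` needs a separating value above `a + 1`. So there are at most
`n - 2` of them. Conversely, in the permutation `maxPermVal n` the maximum has the odd 0-indexed
values on its left and the even ones on its right, so it separates `a` from `a + 1` whenever
`a < n - 2`, in alternating directions starting with down at `a = 0`.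
-/

section UpperBound

variable {n t : ℕ} {σ : Equiv.Perm (Fin n)} {a : Fin n} {b : Bool} {f : Fin t → Fin n}

theorem SepPair.lt_sub_two (h : SepPair σ a) : (a : ℕ) < n - 2 := by
  obtain ⟨_, _, p, _, _, hp⟩ | ⟨_, _, p, _, _, hp⟩ := h <;> omega

theorem AltChain.sepPair (h : AltChain σ b f) (j : Fin t) : SepPair σ (f j) := by
  have hj := h.2 j
  split_ifs at hj
  · exact Or.inr hj
  · exact Or.inl hj

theorem AltChain.length_le (h : AltChain σ b f) : t ≤ n - 2 := by
  let lower (j : Fin t) : Fin (n - 2) := ⟨f j, (h.sepPair j).lt_sub_two⟩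
  have lower_injective : Function.Injective lower := fun i j hij =>
    h.1.injective (Fin.ext (Fin.mk.inj hij))
  simpa using Fintype.card_le_of_injective lower lower_injective

theorem AltChain.le_revTier (h : AltChain σ true f) : t ≤ revTier σ :=
  le_csSup ⟨n - 2, fun _ ⟨_, hg⟩ => hg.length_le⟩ ⟨f, h⟩

theorem revTier_le (σ : Equiv.Perm (Fin n)) : revTier σ ≤ n - 2 :=
  csSup_le' fun _ ⟨_, hf⟩ => hf.length_le

theorem add_two_le_of_le_revTier (ht : 0 < t) (h : t ≤ revTier σ) : t + 2 ≤ n := by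
  have := h.trans (revTier_le σ)
  omega

end UpperBound

section SeparatingValue

variable {n : ℕ} {σ : Equiv.Perm (Fin n)} {a b k : Fin n}

theorem upSepPair_of_symm_lt (hb : (b : ℕ) = a + 1) (hk : b < k)
    (hleft : σ.symm a < σ.symm k) (hright : σ.symm k < σ.symm b) : UpSepPair σ a := by
  obtain ⟨_, hlt⟩ := b
  subst hb
  exact ⟨hlt, hleft.trans hright, σ.symm k, hleft, hright, by simpa [Fin.lt_def] using hk⟩

theorem downSepPair_of_symm_lt (hb : (b : ℕ) = a + 1) (hk : b < k)
    (hleft : σ.symm b < σ.symm k) (hright : σ.symm k < σ.symm a) : DownSepPair σ a := by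
  obtain ⟨_, hlt⟩ := b
  subst hb
  exact ⟨hlt, hleft.trans hright, σ.symm k, hleft, hright, by simpa [Fin.lt_def] using hk⟩

end SeparatingValue

theorem maxPermVal_injective (n : ℕ) : Function.Injective (maxPermVal n) := by
  intro p q h
  have h := congrArg Fin.val h
  unfold maxPermVal at h
  apply Fin.ext
  split_ifs at h <;> dsimp only at h <;> omega

/-- The permutation of length `n` whose one-line notation is `maxPermVal n`; it attains the largest
rev-tier possible for its length. -/
noncomputable def maxPerm (n : ℕ) : Equiv.Perm (Fin n) :=
  Equiv.ofBijective (maxPermVal n) (Finite.injective_iff_bijective.1 (maxPermVal_injective n))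

section MaxPerm

variable {n : ℕ} {a v m : Fin n}

theorem maxPerm_symm_lt_symm_max_iff_odd (hm : (m : ℕ) + 1 = n) (hv : v < m) :
    (maxPerm n).symm v < (maxPerm n).symm m ↔ Odd (v : ℕ) := by
  obtain ⟨p, rfl⟩ := (maxPerm n).surjective v
  obtain ⟨q, rfl⟩ := (maxPerm n).surjective m
  rw [Equiv.symm_apply_apply, Equiv.symm_apply_apply]
  simp only [maxPerm, Equiv.ofBijective_apply, maxPermVal, Fin.lt_def, Nat.odd_iff] at hm hv ⊢
  split_ifs at hm hv ⊢ <;> dsimp only at hm hv ⊢ <;> omega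

theorem maxPerm_symm_max_lt_symm_iff_even (hm : (m : ℕ) + 1 = n) (hv : v < m) :
    (maxPerm n).symm m < (maxPerm n).symm v ↔ Even (v : ℕ) := by
  have hne : (maxPerm n).symm m ≠ (maxPerm n).symm v := (maxPerm n).symm.injective.ne hv.ne'
  rw [← Nat.not_odd_iff_even, ← maxPerm_symm_lt_symm_max_iff_odd hm hv, not_lt, hne.le_iff_lt]

theorem downSepPair_maxPerm (ha : (a : ℕ) + 2 < n) (heven : Even (a : ℕ)) :
    DownSepPair (maxPerm n) a := by
  let b : Fin n := ⟨a + 1, by omega⟩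
  let m : Fin n := ⟨n - 1, by omega⟩
  have hm : (m : ℕ) + 1 = n := Nat.sub_add_cancel (by omega)
  have hbm : b < m := Fin.mk_lt_mk.2 (by omega)
  have ham : a < m := Fin.lt_def.2 (show (a : ℕ) < n - 1 by omega)
  exact downSepPair_of_symm_lt rfl hbm
    ((maxPerm_symm_lt_symm_max_iff_odd hm hbm).2 heven.add_one)
    ((maxPerm_symm_max_lt_symm_iff_even hm ham).2 heven)

theorem upSepPair_maxPerm (ha : (a : ℕ) + 2 < n) (hodd : Odd (a : ℕ)) :
    UpSepPair (maxPerm n) a := by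
  let b : Fin n := ⟨a + 1, by omega⟩
  let m : Fin n := ⟨n - 1, by omega⟩
  have hm : (m : ℕ) + 1 = n := Nat.sub_add_cancel (by omega)
  have hbm : b < m := Fin.mk_lt_mk.2 (by omega)
  have ham : a < m := Fin.lt_def.2 (show (a : ℕ) < n - 1 by omega)
  exact upSepPair_of_symm_lt rfl hbm
    ((maxPerm_symm_lt_symm_max_iff_odd hm ham).2 hodd)
    ((maxPerm_symm_max_lt_symm_iff_even hm hbm).2 hodd.add_one)

theorem altChain_maxPerm (n : ℕ) :
    AltChain (maxPerm n) true (Fin.castLE (Nat.sub_le n 2)) := by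
  refine ⟨Fin.strictMono_castLE _, fun j => ?_⟩
  have hj : (j : ℕ) + 2 < n := by omega
  simp only [iff_true]
  split_ifs with heven
  · exact downSepPair_maxPerm hj (Nat.even_iff.2 heven)
  · exact upSepPair_maxPerm hj (Nat.odd_iff.2 (Nat.mod_two_ne_zero.1 heven))

theorem revTier_maxPerm (n : ℕ) : revTier (maxPerm n) = n - 2 :=
  (revTier_le _).antisymm (altChain_maxPerm n).le_revTier

end MaxPerm

/-- every permutation of rev-tier at least `t+1` has length at least `t+3`,
the bound being attained; in particular every basis element of `B_t` has length at least
`t+3`. -/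
theorem revTier_length_lower_bound (t : ℕ) :
    (∀ {n : ℕ} (σ : Equiv.Perm (Fin n)), t + 1 ≤ revTier σ → t + 3 ≤ n) ∧
    (∃ σ : Equiv.Perm (Fin (t + 3)), revTier σ = t + 1) ∧
    (∀ {n : ℕ} (σ : Equiv.Perm (Fin n)), IsBasisElt t σ → t + 3 ≤ n) := by
  have length_bound {n : ℕ} (σ : Equiv.Perm (Fin n)) (h : t + 1 ≤ revTier σ) : t + 3 ≤ n :=
    add_two_le_of_le_revTier t.succ_pos h
  exact ⟨length_bound, ⟨maxPerm (t + 3), revTier_maxPerm (t + 3)⟩, fun σ h => length_bound σ h.1⟩
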